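/- arXiv:1902.08758 — 2 statements merged into one kernel-verified Lean document; each statement's English description precedes it below -/
import Mathlib

section
/- Let K be a field of characteristic 0, let d ≥ 1, and let δ be the K-algebra derivation of K[x_1,…,x_d,y_1,…,y_d] determined by δ(x_i) = 0 and δ(y_i) = x_i. Then ker δ is spanned as a K-vector space by the set of all products x_1^{p_1}⋯x_d^{p_d} · ∏_{1≤i<j≤d} (x_i·y_j − x_j·y_i)^{q_{ij}}, where p_1,…,p_d and q_{ij} (1 ≤ i < j ≤ d) range over all nonnegative integers. -/
/-!
The argument is a descent on the total degree based on the Capelli identity for `2 × 2` minors.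
Write `u i j = x i * y j - x j * y i` and `Ω i j = ∂x i ∂y j - ∂x j ∂y i` (Cayley's operator).
The commutators of `δ = ∑ x i ∂y i` with the partial derivatives are `[∂x i, δ] = ∂y i` and
`[∂y i, δ] = 0`, so every `Ω i j` maps `ker δ` into itself (`delta_omega`).

For `f ∈ ker δ` homogeneous of total degree `n` and of degree `a` in the `x` variables, the
Capelli identity combined with Euler's identity gives
`∑ i, ∑ j, u i j * Ω i j f = 2 (a + 1) (n - a) f` (`capelli`).
In characteristic zero and for `a ≠ n`, this writes `f` as a combination of the `u i j` with
coefficients in `ker δ` of total degree `n - 2`. The remaining case `a = n` is that of a polynomial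
in the `x i` alone. The reduction to bihomogeneous `f` is possible because `δ` is homogeneous for
both gradings (`component_mem_ker`).
-/

namespace Nowicki

open MvPolynomial

variable {K : Type*} [Field K] {d : ℕ}

/-- The weight giving the degree in the `x` variables. -/
def xWeight (d : ℕ) : Fin d ⊕ Fin d → ℕ := Sum.elim (fun _ => 1) (fun _ => 0)

/-- The minor `x i * y j - x j * y i`. -/
noncomputable def minor (K : Type*) [Field K] {d : ℕ} (i j : Fin d) :
    MvPolynomial (Fin d ⊕ Fin d) K :=
  X (.inl i) * X (.inr j) - X (.inl j) * X (.inr i)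

/-- Cayley's operator `∂x i ∂y j - ∂x j ∂y i`. -/
noncomputable def omega (i j : Fin d) (f : MvPolynomial (Fin d ⊕ Fin d) K) :
    MvPolynomial (Fin d ⊕ Fin d) K :=
  pderiv (.inl i) (pderiv (.inr j) f) - pderiv (.inl j) (pderiv (.inr i) f)

/-- A linear map homogeneous for a grading, with injective effect on degrees, has a
graded kernel. -/
lemma component_mem_ker {σ : Type*} (w : σ → ℕ) (D : MvPolynomial σ K →ₗ[K] MvPolynomial σ K)
    (φ : ℕ → ℕ) (hφ : Function.Injective φ)
    (hD : ∀ n g, IsWeightedHomogeneous w g n → IsWeightedHomogeneous w (D g) (φ n))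
    (f : MvPolynomial σ K) (hf : D f = 0) (n : ℕ) :
    D (weightedHomogeneousComponent w n f) = 0 := by
  classical
  have hfin := weightedHomogeneousComponent_finsupp (w := w) f
  have hs := sum_weightedHomogeneousComponent w f
  rw [finsum_eq_sum _ hfin] at hs
  have h1 : weightedHomogeneousComponent w (φ n) (D f) = 0 := by rw [hf, map_zero]
  rw [← hs, map_sum, map_sum, Finset.sum_eq_single n] at h1
  · rwa [weightedHomogeneousComponent_eq_self
      (hD _ _ (weightedHomogeneousComponent_isWeightedHomogeneous n f))] at h1
  · intro m _ hm
    rw [weightedHomogeneousComponent_of_mem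
      (hD _ _ (weightedHomogeneousComponent_isWeightedHomogeneous m f)),
      if_neg fun h => hm (hφ h).symm]
  · intro hn
    have : weightedHomogeneousComponent w n f = 0 := by
      by_contra h
      exact hn (hfin.mem_toFinset.2 h)
    rw [this, map_zero, map_zero]

lemma pderiv_pderiv_comm {σ : Type*} (i j : σ) (f : MvPolynomial σ K) :
    pderiv i (pderiv j f) = pderiv j (pderiv i f) := by
  classical
  have h : ⁅pderiv (R := K) i, pderiv (R := K) j⁆ = 0 := by
    refine derivation_ext fun k => ?_
    simp [Derivation.commutator_apply, pderiv_X, Pi.single_apply, apply_ite (pderiv _)]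
  have := congrArg (fun D => D f) h
  simpa [Derivation.commutator_apply, sub_eq_zero] using this

lemma delta_apply
    (δ : Derivation K (MvPolynomial (Fin d ⊕ Fin d) K) (MvPolynomial (Fin d ⊕ Fin d) K))
    (hδx : ∀ i, δ (X (.inl i)) = 0) (hδy : ∀ i, δ (X (.inr i)) = X (.inl i))
    (f : MvPolynomial (Fin d ⊕ Fin d) K) :
    δ f = ∑ i, X (.inl i) * pderiv (.inr i) f := by
  have h : δ = ∑ i : Fin d, (X (.inl i) : MvPolynomial (Fin d ⊕ Fin d) K) •
      pderiv (R := K) (Sum.inr i : Fin d ⊕ Fin d) := by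
    refine derivation_ext fun k => ?_
    rw [← Derivation.coeFnAddMonoidHom_apply (∑ i : Fin d, _), map_sum, Finset.sum_apply]
    rcases k with k | k <;> simp [hδx, hδy, pderiv_X, Pi.single_apply]
  conv_lhs => rw [h]
  rw [← Derivation.coeFnAddMonoidHom_apply, map_sum, Finset.sum_apply]
  simp

lemma pderiv_inr_delta
    (δ : Derivation K (MvPolynomial (Fin d ⊕ Fin d) K) (MvPolynomial (Fin d ⊕ Fin d) K))
    (hδx : ∀ i, δ (X (.inl i)) = 0) (hδy : ∀ i, δ (X (.inr i)) = X (.inl i))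
    (i : Fin d) (f : MvPolynomial (Fin d ⊕ Fin d) K) :
    pderiv (.inr i) (δ f) = δ (pderiv (.inr i) f) := by
  have h : ⁅pderiv (R := K) (Sum.inr i : Fin d ⊕ Fin d), δ⁆ = 0 := by
    refine derivation_ext fun k => ?_
    rcases k with k | k <;>
      simp [Derivation.commutator_apply, hδx, hδy, pderiv_X, Pi.single_apply, apply_ite δ]
  have := congrArg (fun D => D f) h
  simpa [Derivation.commutator_apply, sub_eq_zero] using this

lemma pderiv_inl_delta
    (δ : Derivation K (MvPolynomial (Fin d ⊕ Fin d) K) (MvPolynomial (Fin d ⊕ Fin d) K))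
    (hδx : ∀ i, δ (X (.inl i)) = 0) (hδy : ∀ i, δ (X (.inr i)) = X (.inl i))
    (i : Fin d) (f : MvPolynomial (Fin d ⊕ Fin d) K) :
    pderiv (.inl i) (δ f) = δ (pderiv (.inl i) f) + pderiv (.inr i) f := by
  have h : ⁅pderiv (R := K) (Sum.inl i : Fin d ⊕ Fin d), δ⁆ = pderiv (.inr i) := by
    refine derivation_ext fun k => ?_
    rcases k with k | k <;>
      simp [Derivation.commutator_apply, hδx, hδy, pderiv_X, Pi.single_apply, apply_ite δ]
  have := congrArg (fun D => D f) h
  simp only [Derivation.commutator_apply] at this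
  rw [← this]; ring

lemma delta_omega
    (δ : Derivation K (MvPolynomial (Fin d ⊕ Fin d) K) (MvPolynomial (Fin d ⊕ Fin d) K))
    (hδx : ∀ i, δ (X (.inl i)) = 0) (hδy : ∀ i, δ (X (.inr i)) = X (.inl i))
    (i j : Fin d) (f : MvPolynomial (Fin d ⊕ Fin d) K) (hf : δ f = 0) :
    δ (omega i j f) = 0 := by
  have hy : ∀ k, δ (pderiv (.inr k) f) = 0 := fun k => by
    rw [← pderiv_inr_delta δ hδx hδy, hf, map_zero]
  have hxy : ∀ k l, δ (pderiv (.inl k) (pderiv (.inr l) f)) =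
      - pderiv (.inr k) (pderiv (.inr l) f) := fun k l => by
    have := pderiv_inl_delta δ hδx hδy k (pderiv (.inr l) f)
    rw [hy, map_zero] at this
    exact eq_neg_of_add_eq_zero_left this.symm
  rw [omega, map_sub, hxy, hxy, pderiv_pderiv_comm (Sum.inr i)]
  ring

lemma delta_xWeight
    (δ : Derivation K (MvPolynomial (Fin d ⊕ Fin d) K) (MvPolynomial (Fin d ⊕ Fin d) K))
    (hδx : ∀ i, δ (X (.inl i)) = 0) (hδy : ∀ i, δ (X (.inr i)) = X (.inl i))
    (n : ℕ) (g : MvPolynomial (Fin d ⊕ Fin d) K)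
    (hg : IsWeightedHomogeneous (xWeight d) g n) :
    IsWeightedHomogeneous (xWeight d) (δ g) (n + 1) := by
  rw [delta_apply δ hδx hδy]
  refine IsWeightedHomogeneous.sum _ _ _ fun i _ => ?_
  rw [add_comm]
  exact (isWeightedHomogeneous_X K (xWeight d) (.inl i)).mul (hg.pderiv (by simp [xWeight]))

lemma delta_isHomogeneous
    (δ : Derivation K (MvPolynomial (Fin d ⊕ Fin d) K) (MvPolynomial (Fin d ⊕ Fin d) K))
    (hδx : ∀ i, δ (X (.inl i)) = 0) (hδy : ∀ i, δ (X (.inr i)) = X (.inl i))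
    (n : ℕ) (g : MvPolynomial (Fin d ⊕ Fin d) K)
    (hg : g.IsHomogeneous n) : (δ g).IsHomogeneous n := by
  obtain _ | n := n
  · rw [← totalDegree_zero_iff_isHomogeneous, totalDegree_eq_zero_iff_eq_C] at hg
    rw [hg, derivation_C]
    exact isHomogeneous_zero _ _ _
  · rw [delta_apply δ hδx hδy]
    refine IsHomogeneous.sum _ _ _ fun i _ => ?_
    rw [add_comm]
    exact (isHomogeneous_X K _).mul hg.pderiv

/-- The Capelli identity applied to a bihomogeneous constant of `δ`. -/
lemma capelli
    (δ : Derivation K (MvPolynomial (Fin d ⊕ Fin d) K) (MvPolynomial (Fin d ⊕ Fin d) K))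
    (hδx : ∀ i, δ (X (.inl i)) = 0) (hδy : ∀ i, δ (X (.inr i)) = X (.inl i))
    (a n : ℕ) (f : MvPolynomial (Fin d ⊕ Fin d) K) (hf : δ f = 0)
    (ha : IsWeightedHomogeneous (xWeight d) f a) (hn : f.IsHomogeneous n) :
    ∑ i, ∑ j, minor K i j * omega i j f = (2 * (a + 1) * (n - a) : K) • f := by
  have eulerX : ∀ g : MvPolynomial (Fin d ⊕ Fin d) K, IsWeightedHomogeneous (xWeight d) g a →
      ∑ i, X (.inl i) * pderiv (.inl i) g = (a : MvPolynomial (Fin d ⊕ Fin d) K) * g := by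
    intro g hg
    simpa [xWeight] using hg.sum_weight_X_mul_pderiv
  have eulerY : ∑ j, X (.inr j) * pderiv (.inr j) f =
      ((n : MvPolynomial (Fin d ⊕ Fin d) K) - a) * f := by
    have := hn.sum_X_mul_pderiv
    rw [Fintype.sum_sum_type, eulerX f ha, nsmul_eq_mul] at this
    linear_combination this
  have hA : ∑ i, ∑ j, X (.inl i) * X (.inr j) * pderiv (.inl i) (pderiv (.inr j) f) =
      (a : MvPolynomial (Fin d ⊕ Fin d) K) * ∑ j, X (.inr j) * pderiv (.inr j) f := by
    rw [Finset.sum_comm, Finset.mul_sum]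
    refine Finset.sum_congr rfl fun j _ => ?_
    have := eulerX (pderiv (.inr j) f) (ha.pderiv (by simp [xWeight]))
    rw [mul_left_comm, ← this, Finset.mul_sum]
    exact Finset.sum_congr rfl fun i _ => by ring
  -- `∑ i, x i ∂y i ∂x j f = δ (∂x j f) = -∂y j f`, because `δ f = 0`.
  have hB : ∑ i, ∑ j, X (.inl i) * X (.inr j) * pderiv (.inl j) (pderiv (.inr i) f) =
      - ∑ j, X (.inr j) * pderiv (.inr j) f := by
    rw [Finset.sum_comm, ← Finset.sum_neg_distrib]
    refine Finset.sum_congr rfl fun j _ => ?_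
    have h1 := pderiv_inl_delta δ hδx hδy j f
    rw [hf, map_zero, delta_apply δ hδx hδy] at h1
    rw [← mul_neg, ← eq_neg_of_add_eq_zero_left h1.symm, Finset.mul_sum]
    refine Finset.sum_congr rfl fun i _ => ?_
    rw [pderiv_pderiv_comm (Sum.inl j)]
    ring
  have hA' := hA
  have hB' := hB
  rw [Finset.sum_comm] at hA' hB'
  have hsplit : ∑ i, ∑ j, minor K i j * omega i j f =
      ∑ i, ∑ j, X (.inl i) * X (.inr j) * pderiv (.inl i) (pderiv (.inr j) f)
      - ∑ i, ∑ j, X (.inl i) * X (.inr j) * pderiv (.inl j) (pderiv (.inr i) f)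
      + ∑ i, ∑ j, X (.inl j) * X (.inr i) * pderiv (.inl j) (pderiv (.inr i) f)
      - ∑ i, ∑ j, X (.inl j) * X (.inr i) * pderiv (.inl i) (pderiv (.inr j) f) := by
    simp only [← Finset.sum_sub_distrib, ← Finset.sum_add_distrib]
    refine Finset.sum_congr rfl fun i _ => Finset.sum_congr rfl fun j _ => ?_
    rw [minor, omega]
    ring
  rw [hsplit, hA, hB, hA', hB', eulerY, smul_eq_C_mul]
  simp only [map_mul, map_add, map_sub, map_one, map_natCast, map_ofNat]
  ring

/-- The span of the products of powers of the `x k` and of the minors. -/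
noncomputable def prodSpan (K : Type*) [Field K] (d : ℕ) :
    Submodule K (MvPolynomial (Fin d ⊕ Fin d) K) :=
  Submodule.span K {g | ∃ (p : Fin d → ℕ) (q : Fin d → Fin d → ℕ),
    g = (∏ k : Fin d, X (.inl k) ^ p k) *
      ∏ i : Fin d, ∏ j : Fin d, if i < j then minor K i j ^ q i j else 1}

lemma minor_mul_mem_of_lt {i j : Fin d} (hij : i < j) {g : MvPolynomial (Fin d ⊕ Fin d) K}
    (hg : g ∈ prodSpan K d) : minor K i j * g ∈ prodSpan K d := by
  refine Submodule.span_induction (p := fun g _ => minor K i j * g ∈ prodSpan K d)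
    ?_ ?_ ?_ ?_ hg
  · rintro _ ⟨p, q, rfl⟩
    refine Submodule.subset_span
      ⟨p, fun k l => q k l + if k = i ∧ l = j then 1 else 0, ?_⟩
    rw [mul_left_comm]
    congr 1
    have h : ∀ k l : Fin d, (if k < l then
        minor K k l ^ (q k l + if k = i ∧ l = j then 1 else 0) else 1) =
        (if k = i then if l = j then minor K i j else 1 else 1) *
          (if k < l then minor K k l ^ q k l else 1) := by
      intro k l
      by_cases hk : k = i <;> by_cases hl : l = j
      · subst hk hl
        simp [hij, pow_succ']
      all_goals simp [hk, hl]
    simp only [h, Finset.prod_mul_distrib]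
    congr 1
    rw [Finset.prod_eq_single i (fun k _ hk => by simp [hk]) (by simp)]
    simp
  · simp
  · intro a b _ _ ha hb
    rw [mul_add]
    exact add_mem ha hb
  · intro c a _ ha
    rw [mul_smul_comm]
    exact Submodule.smul_mem _ _ ha

lemma minor_mul_mem (i j : Fin d) {g : MvPolynomial (Fin d ⊕ Fin d) K}
    (hg : g ∈ prodSpan K d) : minor K i j * g ∈ prodSpan K d := by
  rcases lt_trichotomy i j with h | h | h
  · exact minor_mul_mem_of_lt h hg
  · subst h
    simp [minor]
  · have : minor K i j * g = -(minor K j i * g) := by simp only [minor]; ring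
    rw [this]
    exact neg_mem (minor_mul_mem_of_lt h hg)

/-- A polynomial in the `x k` alone lies in the span. -/
lemma mem_of_support (f : MvPolynomial (Fin d ⊕ Fin d) K)
    (hf : ∀ m ∈ f.support, ∀ i, m (.inr i) = 0) : f ∈ prodSpan K d := by
  rw [f.as_sum]
  refine sum_mem fun m hm => ?_
  rw [← mul_one (coeff m f), ← smul_eq_mul, ← smul_monomial]
  refine Submodule.smul_mem _ _ (Submodule.subset_span ⟨fun k => m (.inl k), 0, ?_⟩)
  rw [monomial_eq, Finsupp.prod_fintype _ _ (by simp), Fintype.prod_sum_type]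
  simp [hf m hm]

lemma weight_split (m : Fin d ⊕ Fin d →₀ ℕ) :
    Finsupp.weight 1 m = Finsupp.weight (xWeight d) m + ∑ i, m (.inr i) := by
  simp [Finsupp.weight_apply, Finsupp.sum_fintype, xWeight]

lemma mem_of_homogeneous [CharZero K]
    (δ : Derivation K (MvPolynomial (Fin d ⊕ Fin d) K) (MvPolynomial (Fin d ⊕ Fin d) K))
    (hδx : ∀ i, δ (X (.inl i)) = 0) (hδy : ∀ i, δ (X (.inr i)) = X (.inl i)) (n : ℕ) :
    ∀ f : MvPolynomial (Fin d ⊕ Fin d) K, δ f = 0 → f.IsHomogeneous n → f ∈ prodSpan K d := by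
  classical
  induction n using Nat.strong_induction_on with
  | _ n ih =>
  -- Reduction to `f` homogeneous in the `x` variables.
  suffices H : ∀ a, ∀ f : MvPolynomial (Fin d ⊕ Fin d) K, δ f = 0 → f.IsHomogeneous n →
      IsWeightedHomogeneous (xWeight d) f a → f ∈ prodSpan K d by
    intro f hf hn
    rw [← sum_weightedHomogeneousComponent (xWeight d) f,
      finsum_eq_sum _ (weightedHomogeneousComponent_finsupp f)]
    refine sum_mem fun a _ => H a _ ?_ ?_ (weightedHomogeneousComponent_isWeightedHomogeneous a f)
    · exact component_mem_ker (xWeight d) δ.toLinearMap (· + 1) (add_left_injective 1)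
        (delta_xWeight δ hδx hδy) f hf a
    · intro m hm
      rw [coeff_weightedHomogeneousComponent] at hm
      exact hn (fun h => hm (by simp [h]))
  intro a f hf hn ha
  by_cases h0 : n = 0 ∨ n = a
  · refine mem_of_support f fun m hm i => ?_
    have h1 := hn (mem_support_iff.1 hm)
    have h2 := ha (mem_support_iff.1 hm)
    rw [weight_split] at h1
    have h3 : ∑ i, m (.inr i) = 0 := by omega
    exact Finset.sum_eq_zero_iff.1 h3 i (Finset.mem_univ _)
  · push Not at h0
    have hc : (2 * (a + 1) * (n - a) : K) ≠ 0 := by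
      refine mul_ne_zero (mul_ne_zero two_ne_zero (Nat.cast_add_one_ne_zero a)) ?_
      rw [sub_ne_zero]
      exact_mod_cast h0.2
    rw [← Submodule.smul_mem_iff _ hc, ← capelli δ hδx hδy a n f hf ha hn]
    refine sum_mem fun i _ => sum_mem fun j _ => minor_mul_mem i j ?_
    exact ih (n - 1 - 1) (by omega) _ (delta_omega δ hδx hδy i j f hf)
      (hn.pderiv.pderiv.sub hn.pderiv.pderiv)

lemma delta_minor
    (δ : Derivation K (MvPolynomial (Fin d ⊕ Fin d) K) (MvPolynomial (Fin d ⊕ Fin d) K))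
    (hδx : ∀ i, δ (X (.inl i)) = 0) (hδy : ∀ i, δ (X (.inr i)) = X (.inl i)) (i j : Fin d) :
    δ (minor K i j) = 0 := by
  simp only [minor, map_sub, Derivation.leibniz, hδx, hδy, smul_eq_mul]
  ring

/-- The constants of a derivation are closed under finite products. -/
lemma derivation_prod {ι A : Type*} [CommRing A] [Algebra K A] (D : Derivation K A A)
    (s : Finset ι) (g : ι → A) (h : ∀ i ∈ s, D (g i) = 0) : D (∏ i ∈ s, g i) = 0 := by
  refine Finset.prod_induction g (fun a => D a = 0) ?_ (by simp) h
  intro a b ha hb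
  simp [Derivation.leibniz, ha, hb]

end Nowicki

/-- The algebra of constants `ker δ` of the Weitzenböck derivation `δ`
(`δ(x_i) = 0`, `δ(y_i) = x_i`) is spanned as a `K`-vector space by all products
`x_1^{p_1}⋯x_d^{p_d} ∏_{i<j} (x_i y_j − x_j y_i)^{q_{ij}}` with nonnegative integer
exponents. -/
theorem nowicki_constants_spanned_by_products (K : Type*) [Field K] [CharZero K]
    (d : ℕ) (hd : 1 ≤ d)
    (x y : Fin d → MvPolynomial (Fin d ⊕ Fin d) K)
    (hx : ∀ i, x i = MvPolynomial.X (Sum.inl i))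
    (hy : ∀ i, y i = MvPolynomial.X (Sum.inr i))
    (δ : Derivation K (MvPolynomial (Fin d ⊕ Fin d) K) (MvPolynomial (Fin d ⊕ Fin d) K))
    (hδx : ∀ i, δ (x i) = 0) (hδy : ∀ i, δ (y i) = x i) :
    LinearMap.ker δ.toLinearMap =
      Submodule.span K
        {g | ∃ (p : Fin d → ℕ) (q : Fin d → Fin d → ℕ),
          g = (∏ k : Fin d, x k ^ p k) *
                ∏ i : Fin d, ∏ j : Fin d,
                  if i < j then (x i * y j - x j * y i) ^ q i j else 1} := by
  obtain rfl : x = fun i => MvPolynomial.X (Sum.inl i) := funext hx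
  obtain rfl : y = fun i => MvPolynomial.X (Sum.inr i) := funext hy
  change _ = Nowicki.prodSpan K d
  apply le_antisymm
  · intro f hf
    have hf' : δ f = 0 := hf
    rw [← MvPolynomial.sum_homogeneousComponent f]
    refine sum_mem fun n _ => Nowicki.mem_of_homogeneous δ hδx hδy n _ ?_
      (MvPolynomial.homogeneousComponent_isHomogeneous n f)
    exact Nowicki.component_mem_ker 1 δ.toLinearMap id Function.injective_id
      (Nowicki.delta_isHomogeneous δ hδx hδy) f hf' n
  · rw [Nowicki.prodSpan, Submodule.span_le]
    rintro _ ⟨p, q, rfl⟩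
    change δ _ = 0
    rw [Derivation.leibniz, Nowicki.derivation_prod, Nowicki.derivation_prod, smul_zero,
      smul_zero, add_zero]
    · intro k _
      rw [Derivation.leibniz_pow, hδx]
      simp
    · intro i _
      refine Nowicki.derivation_prod _ _ _ fun j _ => ?_
      split_ifs
      · rw [Derivation.leibniz_pow, Nowicki.delta_minor δ hδx hδy]
        simp
      · simp
end

section
/- Let K be a field of characteristic 0, let d ≥ 1, and let δ be the K-algebra derivation of K[x_1,…,x_d,y_1,…,y_d] determined by δ(x_i) = 0 and δ(y_i) = x_i. Then the algebra of constants ker δ is a finitely generated K-algebra; indeed it is generated by the d + d(d−1)/2 elements x_1,…,x_d and u_{ij} = x_i·y_j − x_j·y_i (1 ≤ i < j ≤ d). -/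
/-!
The constants are computed by means of the Capelli identity. Write `∂_ij` for the second order
operator `∂/∂x_i ∂/∂y_j − ∂/∂x_j ∂/∂y_i` and let `E_x`, `E_y` be the Euler operators in the two
groups of variables. Then
`∑_{i,j} x_i y_j ∂_ij = (E_x + 1) E_y − (∑_j y_j ∂/∂x_j) δ`,
and the left-hand side equals `(1/2) ∑_{i,j} u_ij ∂_ij` by antisymmetry. On a constant `p` that is
bihomogeneous of bidegree `(a, b)` this reads `2 (a + 1) b p = ∑_{i,j} u_ij ∂_ij p`
(`capelli_identity`). As `∂_ij` commutes with `δ` (`delta_polar`) and lowers the bidegree by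
`(1, 1)`, each `∂_ij p` is again a bihomogeneous constant, and induction on `b` shows that `p` lies
in the algebra generated by the `x_i` and `u_ij`; for `b = 0` it is a polynomial in the `x_i` alone
(`mem_adjoin_of_bihomogeneous`). Characteristic zero allows the division by `2 (a + 1) b`.

An arbitrary constant reduces to this case because `δ` shifts the bidegree by `(1, -1)`, so
that the bihomogeneous components of a constant are constants (`delta_component_eq_zero`).
-/

open MvPolynomial

namespace Nowicki

/-- The bidegree weight: `x_i` (left summand) has weight `(1, 0)` and `y_i` (right summand) has
weight `(0, 1)`. -/
def bideg (d : ℕ) : Fin d ⊕ Fin d → ℕ × ℕ :=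
  Sum.elim (fun _ => (1, 0)) (fun _ => (0, 1))

/-- The derivation `∑ x_i ∂/∂y_i`, which sends `x_i` to `0` and `y_i` to `x_i`. -/
noncomputable def delta (K : Type*) [Field K] (d : ℕ) :
    Derivation K (MvPolynomial (Fin d ⊕ Fin d) K) (MvPolynomial (Fin d ⊕ Fin d) K) :=
  ∑ i, (X (Sum.inl i) : MvPolynomial (Fin d ⊕ Fin d) K) • pderiv (Sum.inr i)

/-- The operator `∂_ij = ∂/∂x_i ∂/∂y_j − ∂/∂x_j ∂/∂y_i`. -/
noncomputable def polar {K : Type*} [Field K] {d : ℕ} (i j : Fin d)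
    (p : MvPolynomial (Fin d ⊕ Fin d) K) : MvPolynomial (Fin d ⊕ Fin d) K :=
  pderiv (Sum.inl i) (pderiv (Sum.inr j) p) - pderiv (Sum.inl j) (pderiv (Sum.inr i) p)

/-- The generating set: the `x_i` together with the `u_ij = x_i y_j − x_j y_i` for `i < j`. -/
def gens (K : Type*) [Field K] (d : ℕ) : Set (MvPolynomial (Fin d ⊕ Fin d) K) :=
  Set.range (fun i => X (Sum.inl i)) ∪
    {u | ∃ i j : Fin d, i < j ∧
      u = X (Sum.inl i) * X (Sum.inr j) - X (Sum.inl j) * X (Sum.inr i)}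

variable {K : Type*} [Field K] {d : ℕ}

/-! ### The derivation and its commutation relations -/

lemma delta_apply_s8 (p : MvPolynomial (Fin d ⊕ Fin d) K) :
    delta K d p = ∑ i, X (Sum.inl i) * pderiv (Sum.inr i) p := by
  have h : ⇑(delta K d) = ∑ i, ⇑((X (Sum.inl i) : MvPolynomial (Fin d ⊕ Fin d) K) •
      (pderiv (Sum.inr i) : Derivation K (MvPolynomial (Fin d ⊕ Fin d) K) _)) :=
    map_sum (Derivation.coeFnAddMonoidHom (R := K)) _ _
  simp [h]

lemma delta_inl (i : Fin d) : delta K d (X (Sum.inl i)) = 0 := by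
  simp [delta_apply_s8, pderiv_X]

lemma delta_inr (i : Fin d) : delta K d (X (Sum.inr i)) = X (Sum.inl i) := by
  classical
  simp [delta_apply_s8, pderiv_X, Pi.single_apply]

lemma pderiv_comm (s t : Fin d ⊕ Fin d) (p : MvPolynomial (Fin d ⊕ Fin d) K) :
    pderiv s (pderiv t p) = pderiv t (pderiv s p) := by
  classical
  have h : ⁅(pderiv s : Derivation K (MvPolynomial (Fin d ⊕ Fin d) K) _), pderiv t⁆ =
      (0 : Derivation K (MvPolynomial (Fin d ⊕ Fin d) K) (MvPolynomial (Fin d ⊕ Fin d) K)) := by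
    apply derivation_ext
    intro r
    rw [Derivation.commutator_apply, pderiv_X, pderiv_X]
    simp only [Pi.single_apply]
    split_ifs <;> simp
  have := DFunLike.congr_fun h p
  rw [Derivation.commutator_apply] at this
  exact sub_eq_zero.mp this

lemma delta_pderiv_inr (j : Fin d) (p : MvPolynomial (Fin d ⊕ Fin d) K) :
    pderiv (Sum.inr j) (delta K d p) = delta K d (pderiv (Sum.inr j) p) := by
  classical
  simp only [delta_apply_s8, map_sum, Derivation.leibniz, smul_eq_mul]
  refine Finset.sum_congr rfl fun i _ => ?_
  rw [pderiv_comm, pderiv_X_of_ne (by simp)]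
  simp

/-- Commutator relation `[∂/∂x_j, δ] = ∂/∂y_j`. -/
lemma pderiv_inl_delta_s8 (j : Fin d) (p : MvPolynomial (Fin d ⊕ Fin d) K) :
    pderiv (Sum.inl j) (delta K d p) =
      delta K d (pderiv (Sum.inl j) p) + pderiv (Sum.inr j) p := by
  classical
  simp only [delta_apply_s8, map_sum, Derivation.leibniz, smul_eq_mul, Finset.sum_add_distrib]
  congr 1
  · refine Finset.sum_congr rfl fun i _ => ?_
    rw [pderiv_comm]
  · simp [pderiv_X, Pi.single_apply]

/-- `∂_ij` preserves constants. -/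
lemma delta_polar (i j : Fin d) (p : MvPolynomial (Fin d ⊕ Fin d) K) (hp : delta K d p = 0) :
    delta K d (polar i j p) = 0 := by
  have h1 (i j : Fin d) : delta K d (pderiv (Sum.inl i) (pderiv (Sum.inr j) p)) =
      - pderiv (Sum.inr i) (pderiv (Sum.inr j) p) := by
    have h := pderiv_inl_delta_s8 i (pderiv (Sum.inr j) p)
    rw [← delta_pderiv_inr, hp, map_zero, map_zero] at h
    exact eq_neg_of_add_eq_zero_left h.symm
  rw [polar, map_sub, h1, h1, pderiv_comm, sub_self]

/-! ### Euler operators and the Capelli identity -/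

lemma euler_left {a b : ℕ} {p : MvPolynomial (Fin d ⊕ Fin d) K}
    (hp : p.IsWeightedHomogeneous (bideg d) (a, b)) :
    ∑ i, X (Sum.inl i) * pderiv (Sum.inl i) p = (a : MvPolynomial (Fin d ⊕ Fin d) K) * p := by
  have h : p.IsWeightedHomogeneous (fun s => (bideg d s).1) a := by
    intro m hm
    have := congrArg Prod.fst (hp hm)
    rw [Finsupp.weight_apply, Finsupp.sum, Prod.fst_sum] at this
    simpa [Finsupp.weight_apply, Finsupp.sum] using this
  simpa [bideg] using h.sum_weight_X_mul_pderiv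

lemma euler_right {a b : ℕ} {p : MvPolynomial (Fin d ⊕ Fin d) K}
    (hp : p.IsWeightedHomogeneous (bideg d) (a, b)) :
    ∑ i, X (Sum.inr i) * pderiv (Sum.inr i) p = (b : MvPolynomial (Fin d ⊕ Fin d) K) * p := by
  have h : p.IsWeightedHomogeneous (fun s => (bideg d s).2) b := by
    intro m hm
    have := congrArg Prod.snd (hp hm)
    rw [Finsupp.weight_apply, Finsupp.sum, Prod.snd_sum] at this
    simpa [Finsupp.weight_apply, Finsupp.sum] using this
  simpa [bideg] using h.sum_weight_X_mul_pderiv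

/-- The Capelli identity on a bihomogeneous constant of bidegree `(a, b)`. -/
lemma capelli_identity {a b : ℕ} {p : MvPolynomial (Fin d ⊕ Fin d) K}
    (hp : p.IsWeightedHomogeneous (bideg d) (a, b)) (hδ : delta K d p = 0) :
    ∑ i, ∑ j, (X (Sum.inl i) * X (Sum.inr j) - X (Sum.inl j) * X (Sum.inr i)) * polar i j p =
      ((2 * (a + 1) * b : ℕ) : MvPolynomial (Fin d ⊕ Fin d) K) * p := by
  classical
  -- `E_x E_y p = a b p`
  have h1 : ∑ i, ∑ j, X (Sum.inl i) * X (Sum.inr j) *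
      pderiv (Sum.inl i) (pderiv (Sum.inr j) p) =
      (a : MvPolynomial (Fin d ⊕ Fin d) K) * b * p := by
    have key (i : Fin d) : ∑ j, X (Sum.inl i) * X (Sum.inr j) *
        pderiv (Sum.inl i) (pderiv (Sum.inr j) p) =
        (b : MvPolynomial (Fin d ⊕ Fin d) K) * (X (Sum.inl i) * pderiv (Sum.inl i) p) := by
      have h := congrArg (pderiv (Sum.inl i)) (euler_right hp)
      simp only [map_sum, Derivation.leibniz, smul_eq_mul, Derivation.map_natCast, mul_zero,
        add_zero] at h
      rw [mul_left_comm, ← h, Finset.mul_sum]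
      refine Finset.sum_congr rfl fun j _ => ?_
      rw [pderiv_X_of_ne (by simp)]
      ring
    simp only [key]
    rw [← Finset.mul_sum, euler_left hp]
    ring
  -- the expansion of `(∑_j y_j ∂/∂x_j) δ p = 0`
  have h2 : ∑ j, ∑ i, X (Sum.inl i) * X (Sum.inr j) *
      pderiv (Sum.inl j) (pderiv (Sum.inr i) p) =
      -((b : MvPolynomial (Fin d ⊕ Fin d) K) * p) := by
    have key (j : Fin d) : ∑ i, X (Sum.inl i) * X (Sum.inr j) *
        pderiv (Sum.inl j) (pderiv (Sum.inr i) p) =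
        -(X (Sum.inr j) * pderiv (Sum.inr j) p) := by
      have h := pderiv_inl_delta_s8 j p
      rw [hδ, map_zero, delta_apply_s8] at h
      rw [← mul_neg, ← eq_neg_of_add_eq_zero_left h.symm, Finset.mul_sum]
      refine Finset.sum_congr rfl fun i _ => ?_
      rw [pderiv_comm]
      ring
    simp only [key]
    rw [Finset.sum_neg_distrib, euler_right hp]
  have h3 : ∑ i, ∑ j, X (Sum.inl i) * X (Sum.inr j) * polar i j p =
      (a + 1 : MvPolynomial (Fin d ⊕ Fin d) K) * b * p := by
    simp only [polar, mul_sub, Finset.sum_sub_distrib]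
    rw [h1, Finset.sum_comm, h2]
    ring
  have h4 : ∑ i, ∑ j, X (Sum.inl j) * X (Sum.inr i) * polar i j p =
      -((a + 1 : MvPolynomial (Fin d ⊕ Fin d) K) * b * p) := by
    rw [← h3, Finset.sum_comm, ← Finset.sum_neg_distrib]
    refine Finset.sum_congr rfl fun i _ => ?_
    rw [← Finset.sum_neg_distrib]
    refine Finset.sum_congr rfl fun j _ => ?_
    simp only [polar]
    ring
  simp only [sub_mul, Finset.sum_sub_distrib]
  rw [h3, h4]
  push_cast
  ring

/-! ### Bihomogeneous components of constants -/

lemma bideg_le_of_mem_vars {n : ℕ × ℕ} {p : MvPolynomial (Fin d ⊕ Fin d) K}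
    (hp : p.IsWeightedHomogeneous (bideg d) n) {s : Fin d ⊕ Fin d} (hs : s ∈ p.vars) :
    bideg d s ≤ n := by
  obtain ⟨m, hm, hsm⟩ := (mem_vars_iff_mem_support s).mp hs
  rw [← hp (mem_support_iff.mp hm)]
  exact Finsupp.le_weight_of_ne_zero' (bideg d) (Finsupp.mem_support_iff.mp hsm)

lemma pderiv_inr_eq_zero {a : ℕ} {p : MvPolynomial (Fin d ⊕ Fin d) K}
    (hp : p.IsWeightedHomogeneous (bideg d) (a, 0)) (i : Fin d) :
    pderiv (Sum.inr i) p = 0 :=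
  pderiv_eq_zero_of_notMem_vars fun h => by
    simpa [bideg, Prod.le_def] using bideg_le_of_mem_vars hp h

lemma pderiv_inl_eq_zero {b : ℕ} {p : MvPolynomial (Fin d ⊕ Fin d) K}
    (hp : p.IsWeightedHomogeneous (bideg d) (0, b)) (i : Fin d) :
    pderiv (Sum.inl i) p = 0 :=
  pderiv_eq_zero_of_notMem_vars fun h => by
    simpa [bideg, Prod.le_def] using bideg_le_of_mem_vars hp h

lemma delta_eq_zero {a : ℕ} {p : MvPolynomial (Fin d ⊕ Fin d) K}
    (hp : p.IsWeightedHomogeneous (bideg d) (a, 0)) : delta K d p = 0 := by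
  rw [delta_apply_s8]
  exact Finset.sum_eq_zero fun i _ => by rw [pderiv_inr_eq_zero hp, mul_zero]

lemma delta_homogeneous {a b : ℕ} {p : MvPolynomial (Fin d ⊕ Fin d) K}
    (hp : p.IsWeightedHomogeneous (bideg d) (a, b + 1)) :
    (delta K d p).IsWeightedHomogeneous (bideg d) (a + 1, b) := by
  rw [delta_apply_s8]
  refine IsWeightedHomogeneous.sum _ _ _ fun i _ => ?_
  have h1 := isWeightedHomogeneous_X K (bideg d) (Sum.inl i)
  have h2 : (pderiv (Sum.inr i) p).IsWeightedHomogeneous (bideg d) (a, b) :=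
    hp.pderiv (by simp [bideg])
  have h := h1.mul h2
  rwa [show bideg d (Sum.inl i) + (a, b) = (a + 1, b) by simp [bideg, add_comm]] at h

lemma component_delta (a b : ℕ) (p : MvPolynomial (Fin d ⊕ Fin d) K) :
    delta K d (weightedHomogeneousComponent (bideg d) (a, b + 1) p) =
      weightedHomogeneousComponent (bideg d) (a + 1, b) (delta K d p) := by
  induction p using MvPolynomial.induction_on' with
  | add p q hp hq => simp only [map_add, hp, hq]
  | monomial m c =>
    obtain ⟨s, t, hm⟩ : ∃ s t, Finsupp.weight (bideg d) m = (s, t) := ⟨_, _, rfl⟩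
    have h := isWeightedHomogeneous_monomial (bideg d) m c hm
    rcases t with _ | t
    · rw [h.weightedHomogeneousComponent_ne _ (by simp), delta_eq_zero h, map_zero, map_zero]
    · by_cases hst : (a, b) = (s, t)
      · obtain ⟨rfl, rfl⟩ := Prod.mk.inj hst
        rw [h.weightedHomogeneousComponent_same,
          (delta_homogeneous h).weightedHomogeneousComponent_same]
      · rw [h.weightedHomogeneousComponent_ne _ (by simpa using hst),
          (delta_homogeneous h).weightedHomogeneousComponent_ne _ (by simpa using hst), map_zero]

lemma delta_component_eq_zero {p : MvPolynomial (Fin d ⊕ Fin d) K} (hp : delta K d p = 0)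
    (n : ℕ × ℕ) : delta K d (weightedHomogeneousComponent (bideg d) n p) = 0 := by
  obtain ⟨a, b⟩ := n
  rcases b with _ | b
  · exact delta_eq_zero (weightedHomogeneousComponent_isWeightedHomogeneous _ _)
  · rw [component_delta, hp, map_zero]

/-! ### Generation of the constants -/

lemma X_inl_mem (i : Fin d) : X (Sum.inl i) ∈ Algebra.adjoin K (gens K d) :=
  Algebra.subset_adjoin (Or.inl ⟨i, rfl⟩)

lemma u_mem (i j : Fin d) :
    X (Sum.inl i) * X (Sum.inr j) - X (Sum.inl j) * X (Sum.inr i) ∈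
      Algebra.adjoin K (gens K d) := by
  rcases lt_trichotomy i j with h | rfl | h
  · exact Algebra.subset_adjoin (Or.inr ⟨i, j, h, rfl⟩)
  · simp
  · rw [← neg_sub]
    exact neg_mem (Algebra.subset_adjoin (Or.inr ⟨j, i, h, rfl⟩))

lemma mem_adjoin_of_bihomogeneous [CharZero K] (b : ℕ) :
    ∀ (a : ℕ) (p : MvPolynomial (Fin d ⊕ Fin d) K),
      p.IsWeightedHomogeneous (bideg d) (a, b) → delta K d p = 0 →
      p ∈ Algebra.adjoin K (gens K d) := by
  induction b with
  | zero =>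
    intro a p hp _
    have h : p ∈ supported K (Set.range (Sum.inl : Fin d → Fin d ⊕ Fin d)) := by
      rw [mem_supported]
      intro s hs
      have := bideg_le_of_mem_vars hp hs
      rcases s with i | i
      · exact ⟨i, rfl⟩
      · simp [bideg, Prod.le_def] at this
    rw [supported_eq_adjoin_X] at h
    refine Algebra.adjoin_mono ?_ h
    rintro _ ⟨_, ⟨i, rfl⟩, rfl⟩
    exact Or.inl ⟨i, rfl⟩
  | succ b ih =>
    intro a p hp hδ
    have hpolar (i j : Fin d) : polar i j p ∈ Algebra.adjoin K (gens K d) := by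
      have hy (j : Fin d) : (pderiv (Sum.inr j) p).IsWeightedHomogeneous (bideg d) (a, b) :=
        hp.pderiv (by simp [bideg])
      rcases a with _ | a
      · -- no `x` occurs in `p`, so `∂_ij p = 0`
        simp [polar, pderiv_inl_eq_zero (hy _)]
      · have hxy (i j : Fin d) : (pderiv (Sum.inl i) (pderiv (Sum.inr j) p)).IsWeightedHomogeneous
            (bideg d) (a, b) := (hy j).pderiv (by simp [bideg])
        exact ih a _ ((hxy i j).sub (hxy j i)) (delta_polar i j p hδ)
    have hsum := capelli_identity hp hδ
    have hmem : ((2 * (a + 1) * (b + 1) : ℕ) : MvPolynomial (Fin d ⊕ Fin d) K) * p ∈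
        Algebra.adjoin K (gens K d) := by
      rw [← hsum]
      exact sum_mem fun i _ => sum_mem fun j _ => mul_mem (u_mem i j) (hpolar i j)
    have hne : ((2 * (a + 1) * (b + 1) : ℕ) : K) ≠ 0 := Nat.cast_ne_zero.mpr (by positivity)
    have := Subalgebra.smul_mem _ hmem ((2 * (a + 1) * (b + 1) : ℕ) : K)⁻¹
    rwa [← nsmul_eq_mul, ← Nat.cast_smul_eq_nsmul K, smul_smul, inv_mul_cancel₀ hne,
      one_smul] at this

theorem ker_delta [CharZero K] :
    {p | delta K d p = 0} = (Algebra.adjoin K (gens K d) : Set _) := by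
  ext p
  simp only [Set.mem_ofPred_eq, SetLike.mem_coe]
  constructor
  · intro hp
    rw [← sum_weightedHomogeneousComponent (bideg d) p]
    exact finsum_induction (· ∈ Algebra.adjoin K (gens K d)) (zero_mem _)
      (fun _ _ => add_mem) fun n => mem_adjoin_of_bihomogeneous n.2 n.1 _
        (weightedHomogeneousComponent_isWeightedHomogeneous _ _) (delta_component_eq_zero hp n)
  · intro hp
    induction hp using Algebra.adjoin_induction with
    | mem u hu =>
      rcases hu with ⟨i, rfl⟩ | ⟨i, j, _, rfl⟩
      · exact delta_inl i
      · simp only [map_sub, Derivation.leibniz, delta_inl, delta_inr, smul_eq_mul]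
        ring
    | algebraMap r => exact Derivation.map_algebraMap _ r
    | add p q _ _ hp hq => rw [map_add, hp, hq, add_zero]
    | mul p q _ _ hp hq => simp [Derivation.leibniz, hp, hq]

/-! ### Size of the generating set -/

lemma card_pairs_lt (d : ℕ) :
    (Finset.univ.filter fun q : Fin d × Fin d => q.1 < q.2).card = d * (d - 1) / 2 := by
  have h : (Finset.univ.filter fun q : Fin d × Fin d => q.1 < q.2).card =
      ∑ j : Fin d, (Finset.Iio j).card := by
    rw [Finset.card_filter, Fintype.sum_prod_type_right]
    refine Finset.sum_congr rfl fun j _ => ?_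
    rw [← Finset.card_filter]
    congr 1
    ext i
    simp
  rw [h]
  simp only [Fin.card_Iio]
  rw [Fin.sum_univ_eq_sum_range (fun i => i), Finset.sum_range_id]

/-- The generating set is an image of `Fin d` together with an image of the pairs `i < j`. -/
lemma gens_finite_card : (gens K d).Finite ∧ (gens K d).ncard ≤ d + d * (d - 1) / 2 := by
  classical
  have h : gens K d = ↑(Finset.univ.image (fun i : Fin d =>
      (X (Sum.inl i) : MvPolynomial (Fin d ⊕ Fin d) K)) ∪
      (Finset.univ.filter fun q : Fin d × Fin d => q.1 < q.2).image (fun q =>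
        (X (Sum.inl q.1) * X (Sum.inr q.2) - X (Sum.inl q.2) * X (Sum.inr q.1) :
          MvPolynomial (Fin d ⊕ Fin d) K))) := by
    ext u
    simp [gens, eq_comm]
  rw [h]
  refine ⟨Finset.finite_toSet _, ?_⟩
  rw [Set.ncard_coe_finset]
  refine (Finset.card_union_le _ _).trans (add_le_add ?_ ?_)
  · simpa using Finset.card_image_le (s := (Finset.univ : Finset (Fin d)))
      (f := fun i => (X (Sum.inl i) : MvPolynomial (Fin d ⊕ Fin d) K))
  · rw [← card_pairs_lt d]
    exact Finset.card_image_le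

end Nowicki

/-- Weitzenböck's theorem made explicit for the derivation `δ` (`δ(x_i) = 0`,
`δ(y_i) = x_i`): the algebra of constants `ker δ` is a finitely generated `K`-algebra,
generated by the `d + d(d−1)/2` elements `x_1,…,x_d` and
`u_{ij} = x_i y_j − x_j y_i` (`1 ≤ i < j ≤ d`). -/
theorem nowicki_constants_finitely_generated (K : Type*) [Field K] [CharZero K]
    (d : ℕ) (hd : 1 ≤ d)
    (x y : Fin d → MvPolynomial (Fin d ⊕ Fin d) K)
    (hx : ∀ i, x i = MvPolynomial.X (Sum.inl i))
    (hy : ∀ i, y i = MvPolynomial.X (Sum.inr i))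
    (δ : Derivation K (MvPolynomial (Fin d ⊕ Fin d) K) (MvPolynomial (Fin d ⊕ Fin d) K))
    (hδx : ∀ i, δ (x i) = 0) (hδy : ∀ i, δ (y i) = x i)
    (S : Set (MvPolynomial (Fin d ⊕ Fin d) K))
    (hS : S = Set.range x ∪ {u | ∃ i j : Fin d, i < j ∧ u = x i * y j - x j * y i}) :
    S.Finite ∧ S.ncard ≤ d + d * (d - 1) / 2 ∧
      {p : MvPolynomial (Fin d ⊕ Fin d) K | δ p = 0} =
        (Algebra.adjoin K S : Set (MvPolynomial (Fin d ⊕ Fin d) K)) := by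
  obtain rfl : x = fun i => X (Sum.inl i) := funext hx
  obtain rfl : y = fun i => X (Sum.inr i) := funext hy
  obtain rfl : δ = Nowicki.delta K d := by
    apply derivation_ext
    rintro (i | i)
    · rw [Nowicki.delta_inl]
      exact hδx i
    · rw [Nowicki.delta_inr]
      exact hδy i
  obtain rfl : S = Nowicki.gens K d := hS
  exact ⟨Nowicki.gens_finite_card.1, Nowicki.gens_finite_card.2, Nowicki.ker_delta⟩
end
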